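/- Let n > 1 and let K ⊆ ℝⁿ be a convex body with K = −K, and let g = g_{K,K} be its covariogram. Then for every h with 0 < h < vol(K), the superlevel set {x ∈ ℝⁿ : g(x) ≥ h} is strictly convex: for all distinct x, y with g(x) ≥ h and g(y) ≥ h and every t ∈ (0,1), g((1−t)x + ty) > h. -/

import Mathlib

open MeasureTheory Set Pointwise
open ProbabilityTheory Filter Topology
open scoped ENNReal

/-!
Translating `K ∩ (x + K)` by `-x / 2` gives symmetric convex bodies `K_x` with
`a K_x + b K_y ⊆ K_(ax + by)` whenever `a + b = 1`, so the Brunn–Minkowski inequality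
`|A|ᵃ |B|ᵇ ≤ |aA + bB|` makes the covariogram quasi-concave. Strictness needs its equality case:
convex bodies `A`, `B` with equal measures and barycentres and `|aA + bB| = |A|` coincide.

To see this, apply the Prékopa–Leindler inequality to exponential tilts `exp (t φ)` of the
indicators of `A`, `B` and `aA + bB`; equality holds at `t = 0`, so the expansions in `t` can be
compared. For linear `φ = ℓ` the inequality holds for `t` of either sign, so the first orders agree
and the second says that the variance of `ℓ` on `aA + bB` is at least the weighted mean of its
variances on `A` and `B`. The first order, applied to `-(ℓ - m)²` perturbed by a function `f` that
is `1`-Lipschitz in `ℓ`, then shows that `f` has the same mean on `A` and on `B`. The choices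
`f = max (ℓ - r) 0` detect any point of `A` outside `B`.

If the covariogram is not strictly larger at `z = ax + by`, this gives first `K_x = K_y` and then
`K_x = K_z`. But `K_x ∩ K_y` may be translated inside `K_z` by a small multiple of `y - x`, and a
compact set is not mapped into itself by a nonzero translation.
-/

section Real

lemma volume_add_volume_le_of_isCompact {A B : Set ℝ} (hA : IsCompact A) (hB : IsCompact B)
    (hA₀ : A.Nonempty) (hB₀ : B.Nonempty) : volume A + volume B ≤ volume (A + B) := by
  obtain ⟨p, hpA, hp⟩ := hA.exists_isGreatest hA₀
  obtain ⟨q, hqB, hq⟩ := hB.exists_isLeast hB₀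
  have hdisj : AEDisjoint volume (q +ᵥ A) (p +ᵥ B) := by
    refine measure_mono_null (t := {p + q}) ?_ (measure_singleton _)
    rintro _ ⟨⟨x, hx, rfl⟩, y, hy, hxy⟩
    have := hp hx
    have := hq hy
    simp only [vadd_eq_add, mem_singleton_iff] at hxy ⊢
    linarith
  calc volume A + volume B = volume (q +ᵥ A) + volume (p +ᵥ B) := by simp only [measure_vadd]
    _ = volume ((q +ᵥ A) ∪ (p +ᵥ B)) :=
        (measure_union₀ (hB.vadd p).measurableSet.nullMeasurableSet hdisj).symm
    _ ≤ volume (A + B) := by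
        refine measure_mono (union_subset ?_ ?_)
        · rintro _ ⟨x, hx, rfl⟩
          exact ⟨x, hx, q, hqB, add_comm x q⟩
        · rintro _ ⟨y, hy, rfl⟩
          exact ⟨p, hpA, y, hy, rfl⟩

lemma volume_add_volume_le {A B : Set ℝ} (hA : MeasurableSet A) (hB : MeasurableSet B)
    (hA₀ : A.Nonempty) (hB₀ : B.Nonempty) : volume A + volume B ≤ volume (A + B) := by
  obtain ⟨p, hp⟩ := hA₀
  obtain ⟨q, hq⟩ := hB₀
  rw [hA.measure_eq_iSup_isCompact, hB.measure_eq_iSup_isCompact]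
  simp only [iSup_and']
  refine ENNReal.biSup_add_biSup_le' ⟨∅, by simp⟩ ⟨∅, by simp⟩ fun A' hA' B' hB' => ?_
  calc volume A' + volume B' ≤ volume (insert p A') + volume (insert q B') := by
        gcongr <;> exact subset_insert _ _
    _ ≤ volume (insert p A' + insert q B') :=
        volume_add_volume_le_of_isCompact (hA'.2.insert p) (hB'.2.insert q)
          (insert_nonempty _ _) (insert_nonempty _ _)
    _ ≤ volume (A + B) :=
        measure_mono (add_subset_add (insert_subset hp hA'.1) (insert_subset hq hB'.1))

lemma lintegral_eq_lintegral_measure_ofReal_lt {α : Type*} [MeasurableSpace α] (μ : Measure α)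
    {f : α → ℝ≥0∞} (hf : Measurable f) (hf' : ∀ x, f x ≠ ∞) :
    ∫⁻ x, f x ∂μ = ∫⁻ r in Ioi (0 : ℝ), μ {x | ENNReal.ofReal r < f x} := by
  calc ∫⁻ x, f x ∂μ = ∫⁻ x, ENNReal.ofReal (f x).toReal ∂μ := by
        simp only [ENNReal.ofReal_toReal (hf' _)]
    _ = ∫⁻ r in Ioi (0 : ℝ), μ {x | r < (f x).toReal} :=
        lintegral_eq_lintegral_meas_lt μ (.of_forall fun _ => ENNReal.toReal_nonneg)
          hf.ennreal_toReal.aemeasurable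
    _ = ∫⁻ r in Ioi (0 : ℝ), μ {x | ENNReal.ofReal r < f x} :=
        setLIntegral_congr_fun measurableSet_Ioi fun r (hr : 0 < r) => by
          simp only [ENNReal.ofReal_lt_iff_lt_toReal hr.le (hf' _)]

variable {a b : ℝ} {f g h : ℝ → ℝ≥0∞}

lemma ofReal_mul_volume_lt_add_le_of_min_le (ha : 0 < a) (hb : 0 < b)
    (hf : Measurable f) (hg : Measurable g) (hfg : ⨆ x, f x = ⨆ x, g x)
    (hfgh : ∀ x y, min (f x) (g y) ≤ h (a * x + b * y)) (r : ℝ≥0∞) :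
    ENNReal.ofReal a * volume {x | r < f x} + ENNReal.ofReal b * volume {x | r < g x}
      ≤ volume {x | r < h x} := by
  set A := {x | r < f x}
  set B := {x | r < g x}
  rcases lt_or_ge r (⨆ x, f x) with hr | hr
  · have hA : MeasurableSet A := measurableSet_lt measurable_const hf
    have hB : MeasurableSet B := measurableSet_lt measurable_const hg
    have hA₀ : A.Nonempty := lt_iSup_iff (f := f).1 hr
    have hB₀ : B.Nonempty := lt_iSup_iff (f := g).1 (hfg ▸ hr)
    calc ENNReal.ofReal a * volume A + ENNReal.ofReal b * volume B
        = volume (a • A) + volume (b • B) := by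
          simp [Measure.addHaar_smul, abs_of_pos ha, abs_of_pos hb]
      _ ≤ volume (a • A + b • B) :=
          volume_add_volume_le (hA.const_smul₀ a) (hB.const_smul₀ b) hA₀.smul_set hB₀.smul_set
      _ ≤ volume {x | r < h x} := by
          refine measure_mono ?_
          rintro _ ⟨_, ⟨x, hx, rfl⟩, _, ⟨y, hy, rfl⟩, rfl⟩
          exact (lt_min hx hy).trans_le (hfgh x y)
  · have hA : A = ∅ := eq_empty_of_forall_notMem fun x hx =>
      ((le_iSup f x).trans hr).not_gt hx
    have hB : B = ∅ := eq_empty_of_forall_notMem fun x hx =>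
      ((le_iSup g x).trans (hfg ▸ hr)).not_gt hx
    simp [hA, hB]

lemma ofReal_mul_lintegral_add_le_of_min_le (ha : 0 < a) (hb : 0 < b)
    (hf : Measurable f) (hg : Measurable g) (hh : Measurable h)
    (hfg : ⨆ x, f x = ⨆ x, g x) (hf' : ⨆ x, f x ≠ ∞)
    (hfgh : ∀ x y, min (f x) (g y) ≤ h (a * x + b * y)) :
    ENNReal.ofReal a * (∫⁻ x, f x) + ENNReal.ofReal b * (∫⁻ x, g x) ≤ ∫⁻ x, h x := by
  set S := ⨆ x, f x
  have hf_le : ∀ x, f x ≤ S := le_iSup f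
  have hg_le : ∀ x, g x ≤ S := fun x => (le_iSup g x).trans_eq hfg.symm
  have hmeas : ∀ u : ℝ → ℝ≥0∞, Measurable fun r : ℝ => volume {x | ENNReal.ofReal r < u x} :=
    fun u => Antitone.measurable fun r s hrs =>
      measure_mono fun x hx => (ENNReal.ofReal_le_ofReal hrs).trans_lt hx
  have hcut : ∀ x y, min (f x) (g y) ≤ min (h (a * x + b * y)) S := fun x y =>
    le_min (hfgh x y) ((min_le_left _ _).trans (hf_le x))
  calc ENNReal.ofReal a * (∫⁻ x, f x) + ENNReal.ofReal b * (∫⁻ x, g x)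
      = ∫⁻ r in Ioi (0 : ℝ), (ENNReal.ofReal a * volume {x | ENNReal.ofReal r < f x}
          + ENNReal.ofReal b * volume {x | ENNReal.ofReal r < g x}) := by
        rw [lintegral_add_left ((hmeas f).const_mul _), lintegral_const_mul _ (hmeas f),
          lintegral_const_mul _ (hmeas g),
          lintegral_eq_lintegral_measure_ofReal_lt _ hf fun x =>
            ne_top_of_le_ne_top hf' (hf_le x),
          lintegral_eq_lintegral_measure_ofReal_lt _ hg fun x =>
            ne_top_of_le_ne_top hf' (hg_le x)]
    _ ≤ ∫⁻ r in Ioi (0 : ℝ), volume {x | ENNReal.ofReal r < min (h x) S} :=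
        lintegral_mono fun r =>
          ofReal_mul_volume_lt_add_le_of_min_le ha hb hf hg hfg hcut (ENNReal.ofReal r)
    _ = ∫⁻ x, min (h x) S :=
        (lintegral_eq_lintegral_measure_ofReal_lt _ (hh.min measurable_const) fun x =>
          ne_top_of_le_ne_top hf' (min_le_right _ _)).symm
    _ ≤ ∫⁻ x, h x := lintegral_mono fun x => min_le_left _ _

end Real

section WeightedMeans

variable {a b : ℝ}

lemma ennreal_geom_mean_le_arith_mean2_weighted (ha : 0 < a) (hb : 0 < b) (hab : a + b = 1)
    (x y : ℝ≥0∞) : x ^ a * y ^ b ≤ ENNReal.ofReal a * x + ENNReal.ofReal b * y := by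
  induction x with
  | top => simp [ha]
  | coe x =>
    induction y with
    | top => simp [hb]
    | coe y =>
      have h := NNReal.geom_mean_le_arith_mean2_weighted a.toNNReal b.toNNReal x y
        (by rw [← Real.toNNReal_add ha.le hb.le, hab, Real.toNNReal_one])
      rw [Real.coe_toNNReal _ ha.le, Real.coe_toNNReal _ hb.le] at h
      rw [← ENNReal.coe_rpow_of_nonneg _ ha.le, ← ENNReal.coe_rpow_of_nonneg _ hb.le,
        ENNReal.ofReal, ENNReal.ofReal]
      exact_mod_cast h

lemma ennreal_rpow_mul_rpow_self (ha : 0 ≤ a) (hb : 0 ≤ b) (hab : a + b = 1) (x : ℝ≥0∞) :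
    x ^ a * x ^ b = x := by
  rw [← ENNReal.rpow_add_of_nonneg _ _ ha hb, hab, ENNReal.rpow_one]

lemma ennreal_min_le_rpow_mul_rpow (ha : 0 ≤ a) (hb : 0 ≤ b) (hab : a + b = 1) (x y : ℝ≥0∞) :
    min x y ≤ x ^ a * y ^ b := by
  calc min x y = min x y ^ a * min x y ^ b := (ennreal_rpow_mul_rpow_self ha hb hab _).symm
    _ ≤ x ^ a * y ^ b := by
        gcongr
        exacts [min_le_left _ _, min_le_right _ _]

lemma ennreal_mul_rpow_mul_mul_rpow (ha : 0 ≤ a) (hb : 0 ≤ b) (hab : a + b = 1) (c x y : ℝ≥0∞) :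
    (c * x) ^ a * (c * y) ^ b = c * (x ^ a * y ^ b) := by
  rw [ENNReal.mul_rpow_of_nonneg _ _ ha, ENNReal.mul_rpow_of_nonneg _ _ hb, mul_mul_mul_comm,
    ennreal_rpow_mul_rpow_self ha hb hab]

lemma ennreal_eq_of_rpow_mul_rpow_le_min {x y : ℝ≥0∞} (hx : x ≠ 0) (hx' : x ≠ ∞) (hy : y ≠ 0)
    (hy' : y ≠ ∞) (ha : 0 < a) (hb : 0 < b) (hab : a + b = 1)
    (h : x ^ a * y ^ b ≤ min x y) : x = y := by
  wlog hxy : x ≤ y generalizing x y a b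
  · exact (this hy hy' hx hx' hb ha (by rwa [add_comm]) (by rwa [mul_comm, min_comm])
      (le_of_not_ge hxy)).symm
  refine hxy.eq_of_not_lt fun hlt => (h.trans (min_le_left x y)).not_gt ?_
  have hxa : x ^ a ≠ 0 := (ENNReal.rpow_pos (pos_iff_ne_zero.2 hx) hx').ne'
  calc x = x ^ a * x ^ b := (ennreal_rpow_mul_rpow_self ha.le hb.le hab x).symm
    _ < x ^ a * y ^ b :=
      ENNReal.mul_lt_mul_right hxa (by finiteness) (ENNReal.rpow_lt_rpow hlt hb)

end WeightedMeans

/-- `μ` satisfies the **Prékopa–Leindler inequality**, the functional form of the (multiplicative)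
Brunn–Minkowski inequality. Stating it for a measure makes its stability under products, scaling
and linear images available. -/
def IsPrekopaLeindler {E : Type*} [AddCommGroup E] [Module ℝ E] [MeasurableSpace E]
    (μ : Measure E) : Prop :=
  ∀ ⦃a b : ℝ⦄, 0 < a → 0 < b → a + b = 1 →
    ∀ ⦃f g h : E → ℝ≥0∞⦄, Measurable f → Measurable g → Measurable h →
      (∀ x y, f x ^ a * g y ^ b ≤ h (a • x + b • y)) →
        (∫⁻ x, f x ∂μ) ^ a * (∫⁻ x, g x ∂μ) ^ b ≤ ∫⁻ x, h x ∂μ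

lemma rpow_lintegral_mul_rpow_lintegral_le_of_iSup_ne_top {a b : ℝ} {f g h : ℝ → ℝ≥0∞}
    (ha : 0 < a) (hb : 0 < b) (hab : a + b = 1)
    (hf : Measurable f) (hg : Measurable g) (hh : Measurable h)
    (hf' : ⨆ x, f x ≠ ∞) (hg' : ⨆ x, g x ≠ ∞)
    (hfgh : ∀ x y, f x ^ a * g y ^ b ≤ h (a * x + b * y)) :
    (∫⁻ x, f x) ^ a * (∫⁻ x, g x) ^ b ≤ ∫⁻ x, h x := by
  set S := ⨆ x, f x with hS
  set T := ⨆ x, g x with hT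
  by_cases hS₀ : S = 0
  · have : ∀ x, f x = 0 := by simpa [hS] using hS₀
    simp [this, ha]
  by_cases hT₀ : T = 0
  · have : ∀ x, g x = 0 := by simpa [hT] using hT₀
    simp [this, hb]
  set c := S⁻¹ ^ a * T⁻¹ ^ b with hc
  have hc₀ : c ≠ 0 := by
    simp [hc, ENNReal.rpow_eq_zero_iff, hS₀, hT₀, hf', hg', ha, hb]
  have hc' : c ≠ ∞ := ENNReal.mul_ne_top (by simp [hS₀, ha.le]) (by simp [hT₀, hb.le])
  have hmul : ∀ u v : ℝ≥0∞, (S⁻¹ * u) ^ a * (T⁻¹ * v) ^ b = c * (u ^ a * v ^ b) := fun u v => by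
    rw [ENNReal.mul_rpow_of_nonneg _ _ ha.le, ENNReal.mul_rpow_of_nonneg _ _ hb.le,
      mul_mul_mul_comm]
  refine (ENNReal.mul_le_mul_iff_right hc₀ hc').1 ?_
  calc c * ((∫⁻ x, f x) ^ a * (∫⁻ x, g x) ^ b)
      = (∫⁻ x, S⁻¹ * f x) ^ a * (∫⁻ x, T⁻¹ * g x) ^ b := by
        rw [lintegral_const_mul _ hf, lintegral_const_mul _ hg, hmul]
    _ ≤ ENNReal.ofReal a * (∫⁻ x, S⁻¹ * f x) + ENNReal.ofReal b * (∫⁻ x, T⁻¹ * g x) :=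
        ennreal_geom_mean_le_arith_mean2_weighted ha hb hab _ _
    _ ≤ ∫⁻ x, c * h x := by
        have hf₁ : ⨆ x, S⁻¹ * f x = 1 := by
          rw [← ENNReal.mul_iSup, ENNReal.inv_mul_cancel hS₀ hf']
        have hg₁ : ⨆ x, T⁻¹ * g x = 1 := by
          rw [← ENNReal.mul_iSup, ENNReal.inv_mul_cancel hT₀ hg']
        refine ofReal_mul_lintegral_add_le_of_min_le ha hb (hf.const_mul _) (hg.const_mul _)
          (hh.const_mul _) (hf₁.trans hg₁.symm) (by simp [hf₁]) fun x y => ?_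
        refine (ennreal_min_le_rpow_mul_rpow ha.le hb.le hab _ _).trans ?_
        rw [hmul]
        gcongr
        exact hfgh x y
    _ = c * ∫⁻ x, h x := lintegral_const_mul _ hh

lemma tendsto_lintegral_min_natCast {α : Type*} [MeasurableSpace α] (μ : Measure α)
    {f : α → ℝ≥0∞} (hf : Measurable f) :
    Tendsto (fun k : ℕ => ∫⁻ x, min (f x) k ∂μ) atTop (𝓝 (∫⁻ x, f x ∂μ)) := by
  refine lintegral_tendsto_of_tendsto_of_monotone
    (fun k => (hf.min measurable_const).aemeasurable) (.of_forall fun x k l hkl => ?_)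
    (.of_forall fun x => ?_)
  · exact min_le_min_left _ (by exact_mod_cast hkl)
  · simpa using (tendsto_const_nhds (x := f x)).min ENNReal.tendsto_nat_nhds_top

lemma isPrekopaLeindler_volume_real : IsPrekopaLeindler (volume : Measure ℝ) := by
  intro a b ha hb hab f g h hf hg hh hfgh
  by_cases hf₀ : ∫⁻ x, f x = 0
  · simp [hf₀, ha]
  by_cases hg₀ : ∫⁻ x, g x = 0
  · simp [hg₀, hb]
  refine le_of_tendsto (ENNReal.Tendsto.mul
    ((tendsto_lintegral_min_natCast volume hf).ennrpow_const a) (Or.inl ?_)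
    ((tendsto_lintegral_min_natCast volume hg).ennrpow_const b) (Or.inl ?_))
    (.of_forall fun k => ?_)
  · simp [ENNReal.rpow_eq_zero_iff, hf₀, ha.le]
  · simp [ENNReal.rpow_eq_zero_iff, hg₀, hb.le]
  · have hk : ∀ u : ℝ → ℝ≥0∞, ⨆ x, min (u x) (k : ℝ≥0∞) ≠ ∞ := fun u =>
      ne_top_of_le_ne_top (ENNReal.natCast_ne_top k) (iSup_le fun x => min_le_right _ _)
    refine rpow_lintegral_mul_rpow_lintegral_le_of_iSup_ne_top ha hb hab
      (hf.min measurable_const) (hg.min measurable_const) hh (hk f) (hk g)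
      fun x y => (hfgh x y).trans' ?_
    gcongr <;> exact min_le_left _ _

namespace IsPrekopaLeindler

variable {E F : Type*} [AddCommGroup E] [Module ℝ E] [MeasurableSpace E]
  [AddCommGroup F] [Module ℝ F] [MeasurableSpace F] {μ : Measure E} {ν : Measure F}

lemma prod [SFinite ν] (hμ : IsPrekopaLeindler μ) (hν : IsPrekopaLeindler ν) :
    IsPrekopaLeindler (μ.prod ν) := by
  intro a b ha hb hab f g h hf hg hh hfgh
  rw [lintegral_prod f hf.aemeasurable, lintegral_prod g hg.aemeasurable,
    lintegral_prod h hh.aemeasurable]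
  refine hμ ha hb hab hf.lintegral_prod_right' hg.lintegral_prod_right' hh.lintegral_prod_right'
    fun x y => ?_
  exact hν ha hb hab (hf.comp measurable_prodMk_left) (hg.comp measurable_prodMk_left)
    (hh.comp measurable_prodMk_left) fun p q => hfgh (x, p) (y, q)

lemma map (hμ : IsPrekopaLeindler μ) {L : E →ₗ[ℝ] F} (hL : Measurable L) :
    IsPrekopaLeindler (μ.map L) := by
  intro a b ha hb hab f g h hf hg hh hfgh
  rw [lintegral_map hf hL, lintegral_map hg hL, lintegral_map hh hL]
  refine hμ ha hb hab (hf.comp hL) (hg.comp hL) (hh.comp hL) fun x y => ?_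
  simpa using hfgh (L x) (L y)

lemma smul (hμ : IsPrekopaLeindler μ) (c : ℝ≥0∞) : IsPrekopaLeindler (c • μ) := by
  intro a b ha hb hab f g h hf hg hh hfgh
  simp only [lintegral_smul_measure, smul_eq_mul]
  rw [ennreal_mul_rpow_mul_mul_rpow ha.le hb.le hab]
  gcongr
  exact hμ ha hb hab hf hg hh hfgh

end IsPrekopaLeindler

section Haar

variable {E F : Type*} [NormedAddCommGroup E] [NormedSpace ℝ E] [MeasurableSpace E] [BorelSpace E]
  [NormedAddCommGroup F] [NormedSpace ℝ F] [FiniteDimensional ℝ F] [MeasurableSpace F]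
  [BorelSpace F]

lemma IsPrekopaLeindler.of_continuousLinearEquiv {ν : Measure E} [ν.IsAddHaarMeasure]
    (hν : IsPrekopaLeindler ν) (L : E ≃L[ℝ] F) (μ : Measure F) [μ.IsAddHaarMeasure] :
    IsPrekopaLeindler μ := by
  have hL : IsPrekopaLeindler (ν.map L) := hν.map (L := L.toLinearMap) L.continuous.measurable
  have := L.isAddHaarMeasure_map ν
  rw [Measure.isAddLeftInvariant_eq_smul μ (ν.map L)]
  exact hL.smul _

lemma isPrekopaLeindler_volume_pi (n : ℕ) :
    IsPrekopaLeindler (volume : Measure (Fin n → ℝ)) := by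
  induction n with
  | zero =>
    intro a b _ _ _ f g h _ _ _ hfgh
    simp only [lintegral_unique, volume_pi, Measure.pi_empty_univ, mul_one]
    exact (hfgh _ _).trans_eq (congrArg h (Subsingleton.elim _ _))
  | succ n ih =>
    have L : (ℝ × (Fin n → ℝ)) ≃L[ℝ] (Fin (n + 1) → ℝ) :=
      .ofFinrankEq (by simp [add_comm])
    exact (isPrekopaLeindler_volume_real.prod ih).of_continuousLinearEquiv L volume

theorem isPrekopaLeindler_of_isAddHaarMeasure (μ : Measure F) [μ.IsAddHaarMeasure] :
    IsPrekopaLeindler μ :=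
  (isPrekopaLeindler_volume_pi (Module.finrank ℝ F)).of_continuousLinearEquiv
    (.ofFinrankEq (by simp)) μ

end Haar

section UniformMeasure

variable {E : Type*} [TopologicalSpace E] [MeasurableSpace E] [BorelSpace E] [T2Space E]
  {μ : Measure E} [IsFiniteMeasureOnCompacts μ] {S : Set E} {φ : E → ℝ}

lemma integrable_cond_of_continuousOn {F : Type*} [NormedAddCommGroup F]
    [SecondCountableTopologyEither E F] {f : E → F} (hS : IsCompact S) (hf : ContinuousOn f S) :
    Integrable f μ[|S] := by
  by_cases hμS : μ S = 0
  · rw [cond_eq_zero_of_meas_eq_zero hμS]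
    exact integrable_zero_measure
  · exact (hf.integrableOn_compact hS).smul_measure (ENNReal.inv_ne_top.2 hμS)

lemma integrableExpSet_cond_eq_univ (hS : IsCompact S) (hφ : ContinuousOn φ S) :
    integrableExpSet φ μ[|S] = univ :=
  eq_univ_of_forall fun t => integrable_cond_of_continuousOn hS (by fun_prop)

lemma analyticAt_cgf_cond (hS : IsCompact S) (hφ : ContinuousOn φ S) (t : ℝ) :
    AnalyticAt ℝ (cgf φ μ[|S]) t :=
  analyticAt_cgf (by simp [integrableExpSet_cond_eq_univ hS hφ])

lemma hasDerivAt_cgf_cond_zero (hS : IsCompact S) (hμS : μ S ≠ 0) (hφ : ContinuousOn φ S) :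
    HasDerivAt (cgf φ μ[|S]) (∫ p, φ p ∂μ[|S]) 0 := by
  have := cond_isProbabilityMeasure_of_finite hμS hS.measure_ne_top
  have h := (analyticAt_cgf_cond (μ := μ) hS hφ 0).differentiableAt.hasDerivAt
  rwa [deriv_cgf_zero (by simp [integrableExpSet_cond_eq_univ hS hφ]), probReal_univ,
    div_one] at h

lemma iteratedDeriv_two_cgf_cond_zero (hS : IsCompact S) (hμS : μ S ≠ 0) (hφ : ContinuousOn φ S) :
    iteratedDeriv 2 (cgf φ μ[|S]) 0 = Var[φ; μ[|S]] := by
  have := cond_isProbabilityMeasure_of_finite hμS hS.measure_ne_top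
  rw [← variance_tilted_mul (by simp [integrableExpSet_cond_eq_univ hS hφ])]
  simp

lemma exp_cgf_cond_eq_lintegral (hS : IsCompact S) (hμS : μ S ≠ 0) (hφ : ContinuousOn φ S)
    (t : ℝ) : ENNReal.ofReal (Real.exp (cgf φ μ[|S] t))
      = ∫⁻ p, ENNReal.ofReal (Real.exp (t * φ p)) ∂μ[|S] := by
  have := cond_isProbabilityMeasure_of_finite hμS hS.measure_ne_top
  have hint : Integrable (fun p => Real.exp (t * φ p)) μ[|S] :=
    integrable_cond_of_continuousOn hS (by fun_prop)
  rw [exp_cgf hint, mgf, ofReal_integral_eq_lintegral_ofReal hint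
    (.of_forall fun p => (Real.exp_pos _).le)]

lemma integral_sq_sub_integral_add_const_mul_cond (hS : IsCompact S) (hφ : Continuous φ)
    {f : E → ℝ} (hf : Continuous f) (c : ℝ) :
    ∫ p, ((φ p - ∫ q, φ q ∂μ[|S]) ^ 2 + c * f p) ∂μ[|S]
      = Var[φ; μ[|S]] + c * ∫ p, f p ∂μ[|S] := by
  rw [integral_add (integrable_cond_of_continuousOn hS (by fun_prop))
    (integrable_cond_of_continuousOn hS (by fun_prop)), integral_const_mul,
    variance_eq_integral hφ.aemeasurable]

lemma integral_const_sub_sq_cond_le (hS : IsCompact S) (hμS : μ S ≠ 0) (hφ : Continuous φ)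
    (c m : ℝ) : ∫ p, (c - (φ p - m) ^ 2) ∂μ[|S] ≤ c - Var[φ; μ[|S]] := by
  have := cond_isProbabilityMeasure_of_finite hμS hS.measure_ne_top
  rw [integral_sub (integrable_const _) (integrable_cond_of_continuousOn hS (by fun_prop)),
    integral_const, probReal_univ, one_smul, ← variance_sub_const hφ.aestronglyMeasurable m]
  gcongr
  exact variance_le_expectation_sq (by fun_prop)

end UniformMeasure

section LocalMinimum

lemma deriv_deriv_nonneg_of_isLocalMin {f : ℝ → ℝ} {x : ℝ} (hf : IsLocalMin f x)
    (hc : ContinuousAt f x) : 0 ≤ deriv (deriv f) x := by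
  by_contra! hneg
  have hmax : IsLocalMax f x := isLocalMax_of_deriv_deriv_neg hneg hf.deriv_eq_zero hc
  have hconst : f =ᶠ[𝓝 x] fun _ => f x := by
    filter_upwards [hf, hmax] with y hy hy' using le_antisymm hy' hy
  simp [hconst.deriv.deriv_eq] at hneg

lemma nonneg_of_hasDerivAt_zero {f : ℝ → ℝ} {f' : ℝ} (hf : HasDerivAt f f' 0) (hf₀ : f 0 = 0)
    (hpos : ∀ t, 0 < t → 0 ≤ f t) : 0 ≤ f' := by
  refine ge_of_tendsto hf.tendsto_slope_zero_right ?_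
  filter_upwards [self_mem_nhdsWithin] with t (ht : 0 < t)
  have := hpos t ht
  simp only [zero_add, hf₀, sub_zero, smul_eq_mul]
  positivity

end LocalMinimum

section SetInequality

variable {E : Type*} [AddCommGroup E] [Module ℝ E] [MeasurableSpace E] {μ : Measure E}
  {a b : ℝ} {A B : Set E}

lemma IsPrekopaLeindler.setLIntegral (hμ : IsPrekopaLeindler μ) (ha : 0 < a) (hb : 0 < b)
    (hab : a + b = 1) (hA : MeasurableSet A) (hB : MeasurableSet B)
    (hAB : MeasurableSet (a • A + b • B)) {f g h : E → ℝ≥0∞}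
    (hf : Measurable f) (hg : Measurable g) (hh : Measurable h)
    (hfgh : ∀ p ∈ A, ∀ q ∈ B, f p ^ a * g q ^ b ≤ h (a • p + b • q)) :
    (∫⁻ p in A, f p ∂μ) ^ a * (∫⁻ p in B, g p ∂μ) ^ b ≤ ∫⁻ p in a • A + b • B, h p ∂μ := by
  simp only [← lintegral_indicator hA, ← lintegral_indicator hB, ← lintegral_indicator hAB]
  refine hμ ha hb hab (hf.indicator hA) (hg.indicator hB) (hh.indicator hAB) fun p q => ?_
  by_cases hp : p ∈ A
  · by_cases hq : q ∈ B
    · have hpq : a • p + b • q ∈ a • A + b • B :=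
        add_mem_add (smul_mem_smul_set hp) (smul_mem_smul_set hq)
      simpa only [indicator_of_mem, hp, hq, hpq] using hfgh p hp q hq
    · simp [hq, hb]
  · simp [hp, ha]

lemma IsPrekopaLeindler.measure_rpow_mul_le (hμ : IsPrekopaLeindler μ) (ha : 0 < a) (hb : 0 < b)
    (hab : a + b = 1) (hA : MeasurableSet A) (hB : MeasurableSet B)
    (hAB : MeasurableSet (a • A + b • B)) : μ A ^ a * μ B ^ b ≤ μ (a • A + b • B) := by
  simpa using hμ.setLIntegral ha hb hab hA hB hAB (f := 1) (g := 1) (h := 1)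
    measurable_one measurable_one measurable_one (by simp)

end SetInequality

lemma sq_sub_mul_sq_le {a b u v r s : ℝ} (ha : 0 ≤ a) (hb : 0 ≤ b) (hab : a + b = 1) (Δ : ℝ)
    (hrs : |r - s| ≤ |u - v|) : (a * u + b * v) ^ 2 - a * b * Δ ^ 2
      ≤ a * (u ^ 2 + 2 * b * Δ * r) + b * (v ^ 2 + -(2 * a * Δ) * s) := by
  obtain rfl : b = 1 - a := by linarith
  have hΔ : -(|Δ| * |u - v|) ≤ Δ * (r - s) := by
    refine (neg_le_neg ?_).trans (neg_abs_le _)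
    rw [abs_mul]
    gcongr
  have hsq : 0 ≤ (u - v) ^ 2 + 2 * (Δ * (r - s)) + Δ ^ 2 := by
    rw [← sq_abs (u - v), ← sq_abs Δ]
    linarith [sq_nonneg (|u - v| - |Δ|)]
  linarith [mul_nonneg (mul_nonneg ha hb) hsq]

/-- The compact sets `A`, `B` attain equality in the Brunn–Minkowski inequality with weights
`a + b = 1` and have the same (nonzero) measure. -/
structure BrunnMinkowskiEquality {E : Type*} [NormedAddCommGroup E] [NormedSpace ℝ E]
    [MeasurableSpace E] (μ : Measure E) (a b : ℝ) (A B : Set E) : Prop where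
  left_pos : 0 < a
  right_pos : 0 < b
  add_eq_one : a + b = 1
  isCompact_left : IsCompact A
  isCompact_right : IsCompact B
  measure_left_ne_zero : μ A ≠ 0
  measure_right : μ B = μ A
  measure_add : μ (a • A + b • B) = μ A

namespace BrunnMinkowskiEquality

variable {E : Type*} [NormedAddCommGroup E] [NormedSpace ℝ E] [MeasurableSpace E]
  {μ : Measure E} {a b : ℝ} {A B : Set E}

lemma isCompact_add (h : BrunnMinkowskiEquality μ a b A B) : IsCompact (a • A + b • B) :=
  (h.isCompact_left.smul a).add (h.isCompact_right.smul b)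

lemma measure_right_ne_zero (h : BrunnMinkowskiEquality μ a b A B) : μ B ≠ 0 :=
  h.measure_right ▸ h.measure_left_ne_zero

lemma measure_add_ne_zero (h : BrunnMinkowskiEquality μ a b A B) : μ (a • A + b • B) ≠ 0 :=
  h.measure_add ▸ h.measure_left_ne_zero

variable [FiniteDimensional ℝ E] [BorelSpace E] [μ.IsAddHaarMeasure] {φ ψ χ : E → ℝ}

lemma cgf_add_cgf_le (h : BrunnMinkowskiEquality μ a b A B)
    (hφ : Continuous φ) (hψ : Continuous ψ) (hχ : Continuous χ) {t : ℝ}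
    (hle : ∀ p ∈ A, ∀ q ∈ B, t * (a * φ p + b * ψ q) ≤ t * χ (a • p + b • q)) :
    a * cgf φ μ[|A] t + b * cgf ψ μ[|B] t ≤ cgf χ μ[|a • A + b • B] t := by
  have hexp : ∀ u v : ℝ, ENNReal.ofReal (Real.exp u) ^ a * ENNReal.ofReal (Real.exp v) ^ b
      = ENNReal.ofReal (Real.exp (a * u + b * v)) := fun u v => by
    rw [ENNReal.ofReal_rpow_of_pos (Real.exp_pos _), ENNReal.ofReal_rpow_of_pos (Real.exp_pos _),
      ← ENNReal.ofReal_mul (by positivity), ← Real.exp_mul, ← Real.exp_mul, ← Real.exp_add,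
      mul_comm u, mul_comm v]
  have hPL := (isPrekopaLeindler_of_isAddHaarMeasure μ).setLIntegral
    h.left_pos h.right_pos h.add_eq_one h.isCompact_left.measurableSet
    h.isCompact_right.measurableSet h.isCompact_add.measurableSet
    (f := fun p => ENNReal.ofReal (Real.exp (t * φ p)))
    (g := fun p => ENNReal.ofReal (Real.exp (t * ψ p)))
    (h := fun p => ENNReal.ofReal (Real.exp (t * χ p)))
    (by fun_prop) (by fun_prop) (by fun_prop) fun p hp q hq => by
      rw [hexp]
      gcongr
      linarith [hle p hp q hq]
  rw [← Real.exp_le_exp, ← ENNReal.ofReal_le_ofReal_iff (Real.exp_pos _).le, ← hexp,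
    exp_cgf_cond_eq_lintegral h.isCompact_left h.measure_left_ne_zero hφ.continuousOn,
    exp_cgf_cond_eq_lintegral h.isCompact_right h.measure_right_ne_zero hψ.continuousOn,
    exp_cgf_cond_eq_lintegral h.isCompact_add h.measure_add_ne_zero hχ.continuousOn]
  simp only [ProbabilityTheory.cond, lintegral_smul_measure, smul_eq_mul, h.measure_right,
    h.measure_add]
  rw [ennreal_mul_rpow_mul_mul_rpow h.left_pos.le h.right_pos.le h.add_eq_one]
  gcongr

lemma integral_add_integral_le (h : BrunnMinkowskiEquality μ a b A B)
    (hφ : Continuous φ) (hψ : Continuous ψ) (hχ : Continuous χ)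
    (hle : ∀ p ∈ A, ∀ q ∈ B, a * φ p + b * ψ q ≤ χ (a • p + b • q)) :
    a * ∫ p, φ p ∂μ[|A] + b * ∫ p, ψ p ∂μ[|B] ≤ ∫ p, χ p ∂μ[|a • A + b • B] := by
  have hderiv := (hasDerivAt_cgf_cond_zero h.isCompact_add h.measure_add_ne_zero
      hχ.continuousOn).sub
    (((hasDerivAt_cgf_cond_zero h.isCompact_left h.measure_left_ne_zero
        hφ.continuousOn).const_mul a).add
      ((hasDerivAt_cgf_cond_zero h.isCompact_right h.measure_right_ne_zero
        hψ.continuousOn).const_mul b))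
  refine sub_nonneg.1 (nonneg_of_hasDerivAt_zero hderiv (by simp) fun t ht => ?_)
  exact sub_nonneg.2 (h.cgf_add_cgf_le hφ hψ hχ fun p hp q hq =>
    mul_le_mul_of_nonneg_left (hle p hp q hq) ht.le)

lemma variance_add_variance_le (h : BrunnMinkowskiEquality μ a b A B) (ℓ : E →L[ℝ] ℝ) :
    a * Var[ℓ; μ[|A]] + b * Var[ℓ; μ[|B]] ≤ Var[ℓ; μ[|a • A + b • B]] := by
  set D : ℝ → ℝ := cgf ℓ μ[|a • A + b • B] - (a • cgf ℓ μ[|A] + b • cgf ℓ μ[|B]) with hD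
  have hdiff : ∀ {S : Set E}, IsCompact S → ContDiffAt ℝ 2 (cgf ℓ μ[|S]) 0 := fun hS =>
    (analyticAt_cgf_cond hS ℓ.continuous.continuousOn 0).contDiffAt
  have hdA : ContDiffAt ℝ 2 (a • cgf ℓ μ[|A]) 0 := (hdiff h.isCompact_left).const_smul a
  have hdB : ContDiffAt ℝ 2 (b • cgf ℓ μ[|B]) 0 := (hdiff h.isCompact_right).const_smul b
  have hdAB : ContDiffAt ℝ 2 (a • cgf ℓ μ[|A] + b • cgf ℓ μ[|B]) 0 := hdA.add hdB
  have hdM := hdiff h.isCompact_add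
  have hmin : IsLocalMin D 0 := .of_forall fun t => by
    have := h.cgf_add_cgf_le ℓ.continuous ℓ.continuous ℓ.continuous (t := t) (by simp)
    simpa [hD] using this
  have hD₂ : iteratedDeriv 2 D 0 = Var[ℓ; μ[|a • A + b • B]]
      - (a * Var[ℓ; μ[|A]] + b * Var[ℓ; μ[|B]]) := by
    rw [hD, iteratedDeriv_sub (n := 2) hdM hdAB, iteratedDeriv_add (n := 2) hdA hdB,
      iteratedDeriv_const_smul_field, iteratedDeriv_const_smul_field,
      iteratedDeriv_two_cgf_cond_zero h.isCompact_left h.measure_left_ne_zero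
        ℓ.continuous.continuousOn,
      iteratedDeriv_two_cgf_cond_zero h.isCompact_right h.measure_right_ne_zero
        ℓ.continuous.continuousOn,
      iteratedDeriv_two_cgf_cond_zero h.isCompact_add h.measure_add_ne_zero
        ℓ.continuous.continuousOn, smul_eq_mul, smul_eq_mul]
  rw [← sub_nonneg, ← hD₂, iteratedDeriv_succ, iteratedDeriv_one]
  exact deriv_deriv_nonneg_of_isLocalMin hmin (hdM.sub hdAB).continuousAt

lemma integral_eq_of_abs_sub_le (h : BrunnMinkowskiEquality μ a b A B) {ℓ : E →L[ℝ] ℝ}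
    (hℓ : ∫ p, ℓ p ∂μ[|A] = ∫ p, ℓ p ∂μ[|B]) {f : E → ℝ} (hf : Continuous f)
    (hfℓ : ∀ p q, |f p - f q| ≤ |ℓ p - ℓ q|) : ∫ p, f p ∂μ[|A] = ∫ p, f p ∂μ[|B] := by
  obtain ⟨ha, hb, hab⟩ : 0 < a ∧ 0 < b ∧ a + b = 1 := ⟨h.left_pos, h.right_pos, h.add_eq_one⟩
  set m := ∫ p, ℓ p ∂μ[|A]
  set Δ := (∫ p, f p ∂μ[|B]) - ∫ p, f p ∂μ[|A] with hΔ
  -- As `a u² + b v² - (a u + b v)² = a b (u - v)²`, the squares absorb the perturbations by `f` at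
  -- a cost of `a b Δ²`, which is half of the `2 a b Δ²` that these perturbations contribute.
  have hfirst := h.integral_add_integral_le
    (φ := fun p => -((ℓ p - m) ^ 2 + 2 * b * Δ * f p))
    (ψ := fun q => -((ℓ q - m) ^ 2 + -(2 * a * Δ) * f q))
    (χ := fun r => a * b * Δ ^ 2 - (ℓ r - m) ^ 2)
    (by fun_prop) (by fun_prop) (by fun_prop) fun p _ q _ => by
      have hpq := sq_sub_mul_sq_le ha.le hb.le hab Δ (u := ℓ p - m) (v := ℓ q - m)
        (by simpa using hfℓ p q)
      have hr : ℓ (a • p + b • q) - m = a * (ℓ p - m) + b * (ℓ q - m) := by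
        simp only [map_add, map_smul, smul_eq_mul]
        linear_combination m * hab
      rw [hr]
      linarith
  have hM := integral_const_sub_sq_cond_le h.isCompact_add h.measure_add_ne_zero ℓ.continuous
    (a * b * Δ ^ 2) m
  rw [integral_neg, integral_neg,
    integral_sq_sub_integral_add_const_mul_cond h.isCompact_left ℓ.continuous hf, hℓ,
    integral_sq_sub_integral_add_const_mul_cond h.isCompact_right ℓ.continuous hf, ← hℓ] at hfirst
  have hΔ₀ : a * b * Δ ^ 2 ≤ 0 := by
    linear_combination hfirst + hM + h.variance_add_variance_le ℓ
      - 2 * a * b * Δ * hΔ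
  have hΔ₁ : Δ ^ 2 ≤ 0 := nonpos_of_mul_nonpos_right hΔ₀ (mul_pos ha hb)
  linarith [pow_eq_zero_iff two_ne_zero |>.1 (hΔ₁.antisymm (sq_nonneg Δ))]

end BrunnMinkowskiEquality

section ConvexInclusion

variable {E : Type*} [NormedAddCommGroup E] [NormedSpace ℝ E] [FiniteDimensional ℝ E]
  [MeasurableSpace E] [BorelSpace E] {μ : Measure E} [μ.IsAddHaarMeasure] {A B : Set E}

lemma nonempty_interior_of_convex_of_measure_ne_zero (hA : Convex ℝ A) (hμA : μ A ≠ 0) :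
    (interior A).Nonempty := by
  rw [nonempty_iff_ne_empty]
  intro hint
  refine hμA (measure_mono_null (t := frontier A) ?_ (hA.addHaar_frontier μ))
  rw [frontier, hint, sdiff_empty]
  exact subset_closure

lemma subset_of_forall_integral_max_le (hA : IsCompact A) (hAconv : Convex ℝ A) (hμA : μ A ≠ 0)
    (hB : IsClosed B) (hBconv : Convex ℝ B)
    (h : ∀ (ℓ : E →L[ℝ] ℝ) (r : ℝ),
      ∫ p, max (ℓ p - r) 0 ∂μ[|A] ≤ ∫ p, max (ℓ p - r) 0 ∂μ[|B]) : A ⊆ B := by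
  intro x hx
  by_contra hxB
  obtain ⟨ℓ, r, hBr, hxr⟩ := geometric_hahn_banach_closed_point hBconv hB hxB
  have hcont : Continuous fun p => max (ℓ p - r) 0 := by fun_prop
  have hintB : ∫ p, max (ℓ p - r) 0 ∂μ[|B] = 0 := by
    refine integral_eq_zero_of_ae ?_
    filter_upwards [ae_cond_mem hB.measurableSet] with p hp
    simpa using (hBr p hp).le
  have hintA : ∫ p, max (ℓ p - r) 0 ∂μ[|A] = 0 :=
    ((h ℓ r).trans_eq hintB).antisymm (integral_nonneg fun p => le_max_right _ _)
  have haeA : (fun p => max (ℓ p - r) 0) =ᵐ[μ.restrict A] 0 :=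
    Measure.absolutelyContinuous_smul (ENNReal.inv_ne_zero.2 hA.measure_ne_top)
      |>.ae_eq ((integral_eq_zero_iff_of_nonneg (fun p => le_max_right _ _)
        (integrable_cond_of_continuousOn hA hcont.continuousOn)).1 hintA)
  have hregular : A ⊆ closure (interior A) :=
    (hAconv.closure_interior_eq_closure_of_nonempty_interior
      (nonempty_interior_of_convex_of_measure_ne_zero hAconv hμA)).symm ▸ subset_closure
  have hxr' : max (ℓ x - r) 0 = 0 :=
    Measure.eqOn_of_ae_eq haeA hcont.continuousOn continuousOn_const hregular hx
  linarith [le_max_left (ℓ x - r) 0]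

lemma BrunnMinkowskiEquality.eq {a b : ℝ} (h : BrunnMinkowskiEquality μ a b A B)
    (hA : Convex ℝ A) (hB : Convex ℝ B) (hAB : ∫ p, p ∂μ[|A] = ∫ p, p ∂μ[|B]) : A = B := by
  have hlinear : ∀ ℓ : E →L[ℝ] ℝ, ∫ p, ℓ p ∂μ[|A] = ∫ p, ℓ p ∂μ[|B] := fun ℓ => by
    rw [ℓ.integral_comp_comm (φ := fun p => p)
        (integrable_cond_of_continuousOn h.isCompact_left continuousOn_id), hAB,
      ← ℓ.integral_comp_comm (φ := fun p => p)
        (integrable_cond_of_continuousOn h.isCompact_right continuousOn_id)]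
  have hmax : ∀ (ℓ : E →L[ℝ] ℝ) (r : ℝ),
      ∫ p, max (ℓ p - r) 0 ∂μ[|A] = ∫ p, max (ℓ p - r) 0 ∂μ[|B] := fun ℓ r =>
    h.integral_eq_of_abs_sub_le (hlinear ℓ) (by fun_prop) fun p q => by
      simpa using abs_max_sub_max_le_abs (ℓ p - r) (ℓ q - r) 0
  exact (subset_of_forall_integral_max_le h.isCompact_left hA h.measure_left_ne_zero
      h.isCompact_right.isClosed hB fun ℓ r => (hmax ℓ r).le).antisymm
    (subset_of_forall_integral_max_le h.isCompact_right hB h.measure_right_ne_zero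
      h.isCompact_left.isClosed hA fun ℓ r => (hmax ℓ r).ge)

theorem min_measure_lt_measure_smul_add_smul {a b : ℝ} (ha : 0 < a) (hb : 0 < b)
    (hab : a + b = 1) (hA : IsCompact A) (hAconv : Convex ℝ A) (hμA : μ A ≠ 0)
    (hB : IsCompact B) (hBconv : Convex ℝ B) (hμB : μ B ≠ 0)
    (hbar : ∫ p, p ∂μ[|A] = ∫ p, p ∂μ[|B]) (hne : A ≠ B) :
    min (μ A) (μ B) < μ (a • A + b • B) := by
  by_contra! hle
  have hBM := (isPrekopaLeindler_of_isAddHaarMeasure μ).measure_rpow_mul_le ha hb hab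
    hA.measurableSet hB.measurableSet ((hA.smul a).add (hB.smul b)).measurableSet
  have hμ : μ A = μ B := ennreal_eq_of_rpow_mul_rpow_le_min hμA hA.measure_ne_top hμB
    hB.measure_ne_top ha hb hab (hBM.trans hle)
  rw [← hμ, min_self] at hle
  rw [← hμ, ennreal_rpow_mul_rpow_self ha.le hb.le hab] at hBM
  have h : BrunnMinkowskiEquality μ a b A B :=
    ⟨ha, hb, hab, hA, hB, hμA, hμ.symm, hle.antisymm hBM⟩
  exact hne (h.eq hAconv hBconv hbar)

end ConvexInclusion

lemma integral_cond_eq_zero_of_eq_neg {E : Type*} [NormedAddCommGroup E] [NormedSpace ℝ E]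
    [MeasurableSpace E] [MeasurableNeg E] {μ : Measure E} [μ.IsNegInvariant] {A : Set E}
    (hA : MeasurableSet A) (hneg : A = -A) : ∫ p, p ∂μ[|A] = 0 := by
  have hmem : ∀ p, -p ∈ A ↔ p ∈ A := fun p => by rw [← Set.mem_neg, ← hneg]
  have hodd : ∀ p, A.indicator id (-p) = -A.indicator id p := fun p => by
    by_cases hp : p ∈ A <;> simp [hmem, hp]
  have hint : -∫ p, A.indicator id p ∂μ = ∫ p, A.indicator id p ∂μ := by
    rw [← integral_neg, ← integral_neg_eq_self]
    simp only [hodd, neg_neg]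
  have hzero : ∫ p, A.indicator id p ∂μ = 0 := by
    rw [neg_eq_iff_add_eq_zero, ← two_smul ℝ] at hint
    exact (smul_eq_zero_iff_right two_ne_zero).1 hint
  rw [ProbabilityTheory.cond, integral_smul_measure, ← integral_indicator hA]
  exact smul_eq_zero_of_right _ hzero

lemma eq_zero_of_isCompact_of_forall_add_mem {E : Type*} [NormedAddCommGroup E] [NormedSpace ℝ E]
    {S : Set E} (hS : IsCompact S) (hne : S.Nonempty) {v : E} (hv : ∀ p ∈ S, p + v ∈ S) :
    v = 0 := by
  obtain ⟨ℓ, -, hℓ⟩ := exists_dual_vector'' ℝ v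
  obtain ⟨p, hp, hmax⟩ := hS.exists_isMaxOn hne ℓ.continuous.continuousOn
  have hle : ℓ (p + v) ≤ ℓ p := hmax (hv p hp)
  rw [map_add, hℓ] at hle
  exact norm_le_zero_iff.1 (by simpa using hle)

/-- The intersection `K ∩ (x + K)` translated by `-x / 2`; for `K = -K` it is symmetric about the
origin. -/
def centeredOverlap {E : Type*} [AddCommGroup E] [Module ℝ E] (K : Set E) (x : E) : Set E :=
  {p | p + (1 / 2 : ℝ) • x ∈ K ∧ p - (1 / 2 : ℝ) • x ∈ K}

namespace centeredOverlap

variable {E : Type*} [AddCommGroup E] [Module ℝ E] {K : Set E} {x y p q : E} {a b : ℝ}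

lemma smul_add_smul_mem (hK : Convex ℝ K) (ha : 0 ≤ a) (hb : 0 ≤ b) (hab : a + b = 1)
    (hp : p ∈ centeredOverlap K x) (hq : q ∈ centeredOverlap K y) :
    a • p + b • q ∈ centeredOverlap K (a • x + b • y) := by
  constructor
  · convert hK hp.1 hq.1 ha hb hab using 1
    module
  · convert hK hp.2 hq.2 ha hb hab using 1
    module

lemma smul_add_smul_subset (hK : Convex ℝ K) (ha : 0 ≤ a) (hb : 0 ≤ b) (hab : a + b = 1) :
    a • centeredOverlap K x + b • centeredOverlap K y ⊆ centeredOverlap K (a • x + b • y) := by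
  rintro _ ⟨_, ⟨p, hp, rfl⟩, _, ⟨q, hq, rfl⟩, rfl⟩
  exact smul_add_smul_mem hK ha hb hab hp hq

lemma convex (hK : Convex ℝ K) (x : E) : Convex ℝ (centeredOverlap K x) := by
  intro p hp q hq a b ha hb hab
  simpa [← add_smul, hab] using smul_add_smul_mem hK ha hb hab hp hq

lemma eq_neg (hK : K = -K) (x : E) : centeredOverlap K x = -centeredOverlap K x := by
  have hmem : ∀ p, -p ∈ K ↔ p ∈ K := fun p => by rw [← Set.mem_neg, ← hK]
  ext p
  change _ ↔ -p + _ ∈ K ∧ -p - _ ∈ K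
  rw [neg_add_eq_sub, ← neg_sub p, ← neg_add', hmem, hmem]
  exact and_comm

lemma add_smul_mem (hK : Convex ℝ K) {ε : ℝ} (hab : a + b = 1) (hε : |ε| ≤ min a b)
    (hx : p ∈ centeredOverlap K x) (hy : p ∈ centeredOverlap K y) :
    p + (ε / 2) • (y - x) ∈ centeredOverlap K (a • x + b • y) := by
  obtain rfl : b = 1 - a := by linarith
  simp only [le_min_iff, abs_le] at hε
  constructor
  · convert hK hx.1 hy.1 (a := a - ε) (b := 1 - a + ε) (by linarith) (by linarith) (by ring)
      using 1
    module
  · convert hK hx.2 hy.2 (a := a + ε) (b := 1 - a - ε) (by linarith) (by linarith) (by ring)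
      using 1
    module

lemma measure_eq [MeasurableSpace E] [MeasurableAdd E] (μ : Measure E) [μ.IsAddRightInvariant]
    (K : Set E) (x : E) : μ (centeredOverlap K x) = μ (K ∩ (x +ᵥ K)) := by
  rw [← measure_preimage_add_right μ ((1 / 2 : ℝ) • x) (K ∩ (x +ᵥ K))]
  congr 1
  ext p
  simp only [mem_preimage, mem_inter_iff, mem_vadd_set_iff_neg_vadd_mem, vadd_eq_add,
    centeredOverlap, mem_ofPred_eq]
  rw [show -x + (p + (1 / 2 : ℝ) • x) = p - (1 / 2 : ℝ) • x by module]

lemma isCompact [TopologicalSpace E] [IsTopologicalAddGroup E] [T2Space E] (hK : IsCompact K)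
    (x : E) : IsCompact (centeredOverlap K x) :=
  ((Homeomorph.addRight ((1 / 2 : ℝ) • x)).isCompact_preimage.2 hK).inter_right
    (hK.isClosed.preimage (by fun_prop))

section HaarMeasure

variable {E : Type*} [NormedAddCommGroup E] [NormedSpace ℝ E] [FiniteDimensional ℝ E]
  [MeasurableSpace E] [BorelSpace E] {μ : Measure E} [μ.IsAddHaarMeasure] {K : Set E} {x y : E}
  {a b : ℝ}

lemma min_measure_lt_of_ne (hKcomp : IsCompact K) (hKconv : Convex ℝ K) (hKsymm : K = -K)
    (ha : 0 < a) (hb : 0 < b) (hab : a + b = 1) (hμx : μ (centeredOverlap K x) ≠ 0)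
    (hμy : μ (centeredOverlap K y) ≠ 0) (hne : centeredOverlap K x ≠ centeredOverlap K y) :
    min (μ (centeredOverlap K x)) (μ (centeredOverlap K y))
      < μ (a • centeredOverlap K x + b • centeredOverlap K y) := by
  have hbar : ∀ z, ∫ p, p ∂μ[|centeredOverlap K z] = 0 := fun z =>
    integral_cond_eq_zero_of_eq_neg (isCompact hKcomp z).measurableSet (eq_neg hKsymm z)
  exact min_measure_lt_measure_smul_add_smul ha hb hab (isCompact hKcomp x) (convex hKconv x) hμx
    (isCompact hKcomp y) (convex hKconv y) hμy ((hbar x).trans (hbar y).symm) hne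

theorem min_measure_lt (hKcomp : IsCompact K) (hKconv : Convex ℝ K) (hKsymm : K = -K)
    (ha : 0 < a) (hb : 0 < b) (hab : a + b = 1) (hμx : μ (centeredOverlap K x) ≠ 0)
    (hμy : μ (centeredOverlap K y) ≠ 0) (hxy : x ≠ y) :
    min (μ (centeredOverlap K x)) (μ (centeredOverlap K y))
      < μ (centeredOverlap K (a • x + b • y)) := by
  set z := a • x + b • y
  by_contra! hle
  have hx_eq_y : centeredOverlap K x = centeredOverlap K y := by
    by_contra hne
    exact ((min_measure_lt_of_ne hKcomp hKconv hKsymm ha hb hab hμx hμy hne).trans_le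
      (measure_mono (smul_add_smul_subset hKconv ha.le hb.le hab))).not_ge hle
  have hshift : ∀ {ε : ℝ}, |ε| ≤ min a b → ∀ p ∈ centeredOverlap K x,
      p + (ε / 2) • (y - x) ∈ centeredOverlap K z := fun hε p hp =>
    add_smul_mem hKconv hab hε hp (hx_eq_y ▸ hp)
  have hx_sub_z : centeredOverlap K x ⊆ centeredOverlap K z := fun p hp => by
    simpa using hshift (ε := 0) (by simp [ha.le, hb.le]) p hp
  have hx_eq_z : centeredOverlap K x = centeredOverlap K z := by
    by_contra hne
    have hlt := min_measure_lt_of_ne hKcomp hKconv hKsymm ha hb hab hμx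
      (ne_bot_of_le_ne_bot hμx (measure_mono hx_sub_z)) hne
    rw [min_eq_right (hle.trans (min_le_left _ _))] at hlt
    exact hlt.not_ge (measure_mono ((add_subset_add_right (smul_set_mono hx_sub_z)).trans
      (convex_iff_pointwise_add_subset.1 (convex hKconv z) ha.le hb.le hab)))
  have hv : (min a b / 2) • (y - x) = 0 := by
    refine eq_zero_of_isCompact_of_forall_add_mem (isCompact hKcomp x)
      (nonempty_of_measure_ne_zero hμx) fun p hp => ?_
    rw [hx_eq_z]
    exact hshift (abs_of_pos (lt_min ha hb)).le p hp
  have hne : min a b / 2 ≠ 0 := (half_pos (lt_min ha hb)).ne'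
  exact hxy (sub_eq_zero.1 ((smul_eq_zero_iff_right hne).1 hv)).symm

end HaarMeasure

end centeredOverlap

theorem covariogram_symmetric_strict_level_sets_general {E : Type*} [NormedAddCommGroup E]
    [NormedSpace ℝ E] [FiniteDimensional ℝ E] [MeasurableSpace E] [BorelSpace E] (μ : Measure E)
    [μ.IsAddHaarMeasure] {K : Set E} (hKcomp : IsCompact K) (hKconv : Convex ℝ K)
    (hKsymm : K = -K) {h : ℝ} (hpos : 0 < h) {x y : E} (hxy : x ≠ y)
    (hx : h ≤ μ.real (K ∩ (x +ᵥ K))) (hy : h ≤ μ.real (K ∩ (y +ᵥ K))) {t : ℝ}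
    (ht : t ∈ Ioo (0 : ℝ) 1) : h < μ.real (K ∩ (((1 - t) • x + t • y) +ᵥ K)) := by
  have hreal : ∀ z, μ.real (K ∩ (z +ᵥ K)) = (μ (centeredOverlap K z)).toReal := fun z => by
    rw [measureReal_def, centeredOverlap.measure_eq]
  have hfin : ∀ z, μ (centeredOverlap K z) ≠ ∞ := fun z =>
    (centeredOverlap.isCompact hKcomp z).measure_ne_top
  have hne : ∀ {z}, h ≤ (μ (centeredOverlap K z)).toReal → μ (centeredOverlap K z) ≠ 0 :=
    fun hz => (ENNReal.toReal_pos_iff.1 (hpos.trans_le hz)).1.ne'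
  rw [hreal] at hx hy ⊢
  have hlt := centeredOverlap.min_measure_lt hKcomp hKconv hKsymm (sub_pos.2 ht.2) ht.1
    (sub_add_cancel 1 t) (hne hx) (hne hy) hxy
  rw [← ENNReal.ofReal_le_iff_le_toReal (hfin _)] at hx hy
  exact (ENNReal.ofReal_lt_iff_lt_toReal hpos.le (hfin _)).1 ((le_min hx hy).trans_lt hlt)

/-- Meyer–Reisner–Schmuckenschläger: for an origin-symmetric convex body `K ⊆ ℝⁿ`, `n > 1`,
the superlevel sets of the covariogram `g_{K,K}` at heights `0 < h < |K|` are strictly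
convex. -/
theorem covariogram_symmetric_strict_level_sets
    (n : ℕ) (hn : 1 < n)
    (K : Set (EuclideanSpace ℝ (Fin n)))
    (hKcomp : IsCompact K) (hKconv : Convex ℝ K) (hKint : (interior K).Nonempty)
    (hKsymm : K = -K)
    (g : EuclideanSpace ℝ (Fin n) → ℝ)
    (hg : ∀ x, g x = (volume (K ∩ (x +ᵥ K))).toReal) :
    ∀ h : ℝ, 0 < h → h < (volume K).toReal →
      ∀ x y : EuclideanSpace ℝ (Fin n), x ≠ y → h ≤ g x → h ≤ g y →
        ∀ t ∈ Ioo (0 : ℝ) 1, h < g ((1 - t) • x + t • y) := by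
  intro h hpos _ x y hxy hx hy t ht
  rw [hg] at hx hy ⊢
  exact covariogram_symmetric_strict_level_sets_general volume hKcomp hKconv hKsymm hpos hxy hx
    hy ht
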